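/- Let F = (R, Σ) be a subset-free congestion game form containing a bad configuration: resources A, C and strategies s1, s2, s3 ∈ Σ with A ∈ (s1 ∩ s3) \ s2 and C ∈ (s1 ∩ s2) \ s3. If every monotone symmetric congestion game G ∈ 𝒢(F) satisfies Z(G) = NE(G), then there exist two distinct resources B and D with B ∈ s2 \ s1 and D ∈ s3 \ s1. -/

import Mathlib

/-!
Since the form is subset-free, both `s2 \ s1` and `s3 \ s1` are nonempty, so two distinct
resources can be chosen unless `s2 \ s1 = s3 \ s1 = {B}`. In that case there is a two-player
monotone game with a greedy profile that is not an equilibrium, namely `(s1, s2)`.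

Let `N` be the number of resources, `M = 2N + 1` and `L = M (N + 1)`. The payoffs at congestion
`1` are `2` on `s1`, `1` on `B` and `-L` elsewhere. At congestion `2` they are `0` on `B`, `-M` on
`s1 ∩ s2`, `-L` on `s1 \ s2` and `-L - 1` elsewhere.

* The first player takes `s1`: a strategy using a resource outside `s1 ∪ {B}` loses `L`, and any
  other strategy trades at least one resource of `s1`, worth `2`, for `B`, worth `1`.
* The second player then takes `s2`: every other strategy contains a resource outside `s2`, and all
  of these now cost at least `L`, which is more than the whole cost of `s2`.
* The first player now gains by moving to `s3`: `B` costs nothing, the resources of `s1 ∩ s3` are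
  kept, and dropping `s1 \ s3` sheds the loss `M` at `C`, more than `s1 \ s3` can otherwise be worth.
-/

open Finset

/-- Congestion of resource `r` under strategy profile `s` (players `ι`). -/
def cgCong {ρ ι : Type} [DecidableEq ρ] [Fintype ι] (s : ι → Finset ρ) (r : ρ) : ℕ :=
  (Finset.univ.filter (fun i => r ∈ s i)).card

/-- Utility of player `i`: the sum of `P r (c(s)_r)` over the resources she uses. -/
def cgUtil {ρ ι : Type} [DecidableEq ρ] [Fintype ι] (P : ρ → ℕ → ℝ)
    (s : ι → Finset ρ) (i : ι) : ℝ :=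
  ∑ r ∈ s i, P r (cgCong s r)

/-- A strategy profile: every player selects a strategy from the strategy set `SS`. -/
def IsProfile {ρ ι : Type} (SS : Finset (Finset ρ)) (s : ι → Finset ρ) : Prop :=
  ∀ i, s i ∈ SS

/-- Pure Nash equilibrium. -/
def IsNE {ρ ι : Type} [DecidableEq ρ] [DecidableEq ι] [Fintype ι]
    (SS : Finset (Finset ρ)) (P : ρ → ℕ → ℝ) (s : ι → Finset ρ) : Prop :=
  IsProfile SS s ∧
    ∀ i : ι, ∀ t ∈ SS, cgUtil P s i ≥ cgUtil P (Function.update s i t) i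

/-- The congestion seen by player `i` on resource `r` from players preceding her
in the order `π`. -/
def greedyCong {ρ ι : Type} [DecidableEq ρ] [Fintype ι] (s : ι → Finset ρ)
    (π : ι → ℕ) (i : ι) (r : ρ) : ℕ :=
  (Finset.univ.filter (fun j => r ∈ s j ∧ π j < π i)).card

/-- Greedy profile: for some linear order (injective ranking `π`) of the players,
each player's strategy is a best response to the choices of her predecessors. -/
def IsGreedy {ρ ι : Type} [DecidableEq ρ] [Fintype ι]
    (SS : Finset (Finset ρ)) (P : ρ → ℕ → ℝ) (s : ι → Finset ρ) : Prop :=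
  IsProfile SS s ∧
    ∃ π : ι → ℕ, Function.Injective π ∧ ∀ i : ι, ∀ t ∈ SS,
      (∑ r ∈ s i, P r (greedyCong s π i r + 1)) ≥
        ∑ r ∈ t, P r (greedyCong s π i r + 1)

/-- Monotone resource payoffs (for a game with `n` players):
`P_r(k) > P_r(l)` whenever `1 ≤ k < l ≤ n`. -/
def MonotonePay {ρ : Type} (n : ℕ) (P : ρ → ℕ → ℝ) : Prop :=
  ∀ r : ρ, ∀ k l : ℕ, 1 ≤ k → k < l → l ≤ n → P r k > P r l

/-- A congestion game form: nonempty strategy set consisting of nonempty resource sets. -/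
def ValidForm {ρ : Type} (SS : Finset (Finset ρ)) : Prop :=
  SS.Nonempty ∧ ∀ s ∈ SS, s.Nonempty

/-- Subset-free strategy set. -/
def SubsetFree {ρ : Type} (SS : Finset (Finset ρ)) : Prop :=
  ∀ s ∈ SS, ∀ t ∈ SS, s ≠ t → ¬ s ⊆ t

/-- A bad configuration (Holzman–Law Yone): a form is tree representable iff
it has no bad configuration. -/
def BadConfig {ρ : Type} (SS : Finset (Finset ρ)) : Prop :=
  ∃ A B : ρ, ∃ s1 ∈ SS, ∃ s2 ∈ SS, ∃ s3 ∈ SS,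
    A ∈ s1 ∧ B ∈ s1 ∧ A ∈ s2 ∧ A ∉ s3 ∧ B ∈ s3 ∧ B ∉ s2


/-- Payoff of a resource used by one player in the counterexample game. -/
noncomputable def payOne {ρ : Type} [DecidableEq ρ] (s1 : Finset ρ) (B : ρ) (L : ℝ) (r : ρ) : ℝ :=
  if r ∈ s1 then 2 else if r = B then 1 else -L

/-- Payoff of a resource used by two players in the counterexample game. -/
noncomputable def payTwo {ρ : Type} [DecidableEq ρ] (s1 s2 : Finset ρ) (B : ρ) (M L : ℝ) (r : ρ) :
    ℝ :=
  if r ∈ s1 then (if r ∈ s2 then -M else -L) else if r = B then 0 else -L - 1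

/-- A finite sum whose terms are at most `c`, one of them being at most `d`. -/
lemma sum_le_of_special {ρ : Type} [DecidableEq ρ] [Fintype ρ] (t : Finset ρ) (f : ρ → ℝ) (z : ρ)
    (hz : z ∈ t) (c d : ℝ) (hc : 0 ≤ c) (hd : f z ≤ d) (hf : ∀ r, f r ≤ c) :
    ∑ r ∈ t, f r ≤ d + c * Fintype.card ρ := by
  rw [← Finset.add_sum_erase t f hz]
  have h : ∑ r ∈ t.erase z, f r ≤ (t.erase z).card • c :=
    Finset.sum_le_card_nsmul _ _ _ fun r _ => hf r
  rw [nsmul_eq_mul] at h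
  have h' : ((t.erase z).card : ℝ) ≤ Fintype.card ρ := by exact_mod_cast Finset.card_le_univ _
  nlinarith

/-- In a subset-free form, if `s2 \ s1` and `s3 \ s1` are the same singleton, some two-player
monotone game has a greedy profile that is not an equilibrium. -/
lemma exists_greedy_not_NE {ρ : Type} [DecidableEq ρ] [Fintype ρ]
    (SS : Finset (Finset ρ)) (hsf : SubsetFree SS)
    (B C : ρ) (s1 s2 s3 : Finset ρ)
    (h1 : s1 ∈ SS) (h2 : s2 ∈ SS) (h3 : s3 ∈ SS)
    (hC1 : C ∈ s1) (hC2 : C ∈ s2) (hC3 : C ∉ s3)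
    (hB1 : B ∉ s1) (hB2 : B ∈ s2) (hB3 : B ∈ s3)
    (h2B : ∀ r ∈ s2, r ∉ s1 → r = B) (h3B : ∀ r ∈ s3, r ∉ s1 → r = B) :
    ∃ P : ρ → ℕ → ℝ, MonotonePay 2 P ∧ ∃ s : Fin 2 → Finset ρ,
      IsGreedy SS P s ∧ ¬ IsNE SS P s := by
  have hsub : ∀ t ∈ SS, ∀ u ∈ SS, t ≠ u → ∃ z ∈ t, z ∉ u := fun t ht u hu hne =>
    Finset.not_subset.1 (hsf t ht u hu hne)
  obtain ⟨N, hN⟩ : ∃ N : ℝ, N = Fintype.card ρ := ⟨_, rfl⟩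
  have hN0 : 0 ≤ N := by rw [hN]; positivity
  obtain ⟨M, hM⟩ : ∃ M : ℝ, M = 2 * N + 1 := ⟨_, rfl⟩
  obtain ⟨L, hL⟩ : ∃ L : ℝ, L = M * (N + 1) := ⟨_, rfl⟩
  have hML : M ≤ L := by nlinarith
  set w := payOne s1 B L with hw
  set v := payTwo s1 s2 B M L with hv
  have hw1 : ∀ r ∈ s1, w r = 2 := fun r hr => by simp [hw, payOne, hr]
  have hwB : w B = 1 := by simp [hw, payOne, hB1]
  have hwo : ∀ r, r ∉ s1 → r ≠ B → w r = -L := fun r hr hr' => by simp [hw, payOne, hr, hr']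
  have hv12 : ∀ r ∈ s1, r ∈ s2 → v r = -M := fun r hr hr' => by simp [hv, payTwo, hr, hr']
  have hv1 : ∀ r ∈ s1, r ∉ s2 → v r = -L := fun r hr hr' => by simp [hv, payTwo, hr, hr']
  have hvB : v B = 0 := by simp [hv, payTwo, hB1]
  have hw2 : ∀ r, w r ≤ 2 := fun r => by
    simp only [hw, payOne]; split_ifs <;> linarith
  have hvw : ∀ r, v r < w r := fun r => by
    simp only [hw, hv, payOne, payTwo]; split_ifs <;> linarith
  refine ⟨fun r k => if k ≤ 1 then w r else v r, ?_, ![s1, s2], ⟨?_, Fin.val, Fin.val_injective, ?_⟩,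
    ?_⟩
  · intro r k l hk hkl hl
    obtain ⟨rfl, rfl⟩ : k = 1 ∧ l = 2 := by omega
    simpa using hvw r
  · intro i
    fin_cases i <;> simp [h1, h2]
  · intro i t ht
    fin_cases i
    · suffices h : ∑ r ∈ t, w r ≤ ∑ r ∈ s1, w r by
        simpa [greedyCong] using h
      by_cases hts : t = s1
      · rw [hts]
      by_cases hz : ∃ z ∈ t, z ∉ s1 ∧ z ≠ B
      · obtain ⟨z, hzt, hz1, hzB⟩ := hz
        have h := sum_le_of_special t w z hzt 2 (-L) (by norm_num) (hwo z hz1 hzB).le hw2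
        have h' : 0 ≤ ∑ r ∈ s1, w r := Finset.sum_nonneg fun r hr => by rw [hw1 r hr]; norm_num
        rw [← hN] at h
        linarith
      · push Not at hz
        obtain ⟨e, he1, het⟩ := hsub s1 h1 t ht (Ne.symm hts)
        have hsubs : t ⊆ insert B (s1.erase e) := by
          intro r hr
          by_cases hr1 : r ∈ s1
          · have : r ≠ e := fun h => het (h ▸ hr)
            simp [hr1, this]
          · simp [hz r hr hr1]
        calc ∑ r ∈ t, w r ≤ ∑ r ∈ insert B (s1.erase e), w r := by
              refine Finset.sum_le_sum_of_subset_of_nonneg hsubs fun r hr _ => ?_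
              rcases Finset.mem_insert.1 hr with rfl | hr
              · rw [hwB]; norm_num
              · rw [hw1 r (Finset.mem_of_mem_erase hr)]; norm_num
          _ = 1 + ∑ r ∈ s1.erase e, w r := by
              rw [Finset.sum_insert (by simp [hB1]), hwB]
          _ ≤ w e + ∑ r ∈ s1.erase e, w r := by rw [hw1 e he1]; linarith
          _ = ∑ r ∈ s1, w r := Finset.add_sum_erase s1 w he1
    · have hcong : ∀ r, greedyCong (![s1, s2] : Fin 2 → Finset ρ) Fin.val 1 r
          = if r ∈ s1 then 1 else 0 := by
        intro r
        rw [greedyCong, Finset.card_filter, Fin.sum_univ_two]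
        simp
      set q : ρ → ℝ := fun r => if r ∈ s1 then v r else w r with hq
      suffices h : ∑ r ∈ t, q r ≤ ∑ r ∈ s2, q r by
        have key : ∀ r, (if greedyCong (![s1, s2] : Fin 2 → Finset ρ) Fin.val 1 r + 1 ≤ 1
            then w r else v r) = q r := by
          intro r
          rw [hcong]
          by_cases hr : r ∈ s1 <;> simp [hq, hr]
        simpa only [Fin.mk_one, key, Matrix.cons_val_one, Matrix.cons_val_zero, ge_iff_le,
          Matrix.cons_val_fin_one] using h
      by_cases hts : t = s2
      · rw [hts]
      obtain ⟨z, hzt, hz2⟩ := hsub t ht s2 h2 hts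
      have hqz : q z ≤ -L := by
        by_cases hz1 : z ∈ s1
        · simp [hq, hz1, hv1 z hz1 hz2]
        · simp [hq, hz1, hwo z hz1 (fun h => hz2 (h ▸ hB2))]
      have hq1 : ∀ r, q r ≤ 1 := by
        intro r
        simp only [hq, hw, hv, payOne, payTwo]
        split_ifs <;> linarith
      have h := sum_le_of_special t q z hzt 1 (-L) (by norm_num) hqz hq1
      have h' : s2.card • (-M) ≤ ∑ r ∈ s2, q r := by
        refine Finset.card_nsmul_le_sum _ _ _ fun r hr => ?_
        by_cases hr1 : r ∈ s1
        · simp [hq, hr1, hv12 r hr1 hr]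
        · simp only [hq, h2B r hr hr1, if_neg hB1, hwB]; linarith
      have hc : (s2.card : ℝ) ≤ N := by rw [hN]; exact_mod_cast Finset.card_le_univ _
      rw [nsmul_eq_mul] at h'
      rw [← hN] at h
      nlinarith
  · rintro ⟨-, hNE⟩
    have hdev := hNE 0 s3 h3
    set f : ρ → ℝ := fun r => if r ∈ s2 then v r else w r with hf
    -- With player `1` fixed at `s2`, player `0` collects `f` on whatever strategy is played.
    have hval : ∀ u : Finset ρ, ∀ s : Fin 2 → Finset ρ, s 0 = u → s 1 = s2 →
        cgUtil (fun r k => if k ≤ 1 then w r else v r) s 0 = ∑ r ∈ u, f r := by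
      intro u s hs0 hs1
      unfold cgUtil
      rw [hs0]
      refine Finset.sum_congr rfl fun r hr => ?_
      have : cgCong s r = 1 + if r ∈ s2 then 1 else 0 := by
        rw [cgCong, Finset.card_filter, Fin.sum_univ_two, hs0, hs1, if_pos hr]
      rw [this]
      by_cases hr2 : r ∈ s2 <;> simp [hf, hr2]
    rw [hval s1 _ rfl rfl, hval s3 _ (by simp) (by simp)] at hdev
    have hs3 : ∑ r ∈ s3, f r = ∑ r ∈ s1 ∩ s3, f r := by
      refine (Finset.sum_subset Finset.inter_subset_right fun r hr hr' => ?_).symm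
      have hr1 : r ∉ s1 := fun h => hr' (Finset.mem_inter.2 ⟨h, hr⟩)
      rw [h3B r hr hr1]
      simp [hf, hB2, hvB]
    have hf2 : ∀ r, f r ≤ 2 := by
      intro r
      by_cases hr2 : r ∈ s2
      · simp only [hf, if_pos hr2]; linarith [hvw r, hw2 r]
      · simpa only [hf, if_neg hr2] using hw2 r
    have hfC : f C ≤ -M := by simp [hf, hC2, hv12 C hC1 hC2]
    have hdiff := sum_le_of_special (s1 \ s3) f C (Finset.mem_sdiff.2 ⟨hC1, hC3⟩) 2 (-M)
      (by norm_num) hfC hf2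
    rw [← hN] at hdiff
    have hsplit := Finset.sum_inter_add_sum_sdiff s1 s3 f
    linarith

/-- Given a bad configuration `(A, C, s1, s2, s3)` in a subset-free form: if
every monotone game with this form satisfies `Z(G) = NE(G)`, then there are two
distinct resources `B ∈ s2 \ s1` and `D ∈ s3 \ s1`. -/
theorem exists_distinct_B_D {ρ : Type} [DecidableEq ρ] [Fintype ρ]
    (SS : Finset (Finset ρ)) (hform : ValidForm SS) (hsf : SubsetFree SS)
    (A C : ρ) (s1 s2 s3 : Finset ρ)
    (h1 : s1 ∈ SS) (h2 : s2 ∈ SS) (h3 : s3 ∈ SS)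
    (hA1 : A ∈ s1) (hA3 : A ∈ s3) (hA2 : A ∉ s2)
    (hC1 : C ∈ s1) (hC2 : C ∈ s2) (hC3 : C ∉ s3)
    (hZN : ∀ n : ℕ, 1 ≤ n → ∀ P : ρ → ℕ → ℝ, MonotonePay n P →
      ∀ s : Fin n → Finset ρ, (IsGreedy SS P s ↔ IsNE SS P s)) :
    ∃ B D : ρ, B ≠ D ∧ B ∈ s2 ∧ B ∉ s1 ∧ D ∈ s3 ∧ D ∉ s1 := by
  have h21 : s2 ≠ s1 := fun h => hA2 (h ▸ hA1)
  have h31 : s3 ≠ s1 := fun h => hC3 (h ▸ hC1)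
  obtain ⟨B, hB2, hB1⟩ := Finset.not_subset.1 (hsf s2 h2 s1 h1 h21)
  obtain ⟨D, hD3, hD1⟩ := Finset.not_subset.1 (hsf s3 h3 s1 h1 h31)
  by_contra hcon
  have hall : ∀ b ∈ s2, b ∉ s1 → ∀ d ∈ s3, d ∉ s1 → b = d := by
    intro b hb hb1 d hd hd1
    by_contra hne
    exact hcon ⟨b, d, hne, hb, hb1, hd, hd1⟩
  obtain rfl : B = D := hall B hB2 hB1 D hD3 hD1
  obtain ⟨P, hP, s, hZ, hnot⟩ := exists_greedy_not_NE SS hsf B C s1 s2 s3 h1 h2 h3 hC1 hC2 hC3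
    hB1 hB2 hD3 (fun r hr hr1 => hall r hr hr1 B hD3 hD1)
    (fun r hr hr1 => (hall B hB2 hB1 r hr hr1).symm)
  exact hnot ((hZN 2 (by norm_num) P hP s).1 hZ)
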